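/- arXiv:1807.06948 — 4 statements merged into one kernel-verified Lean document; each statement's English description precedes it below -/
import Mathlib

section
/- Let s > 1/2. There exists a constant C = C(s) such that for all sequences M, N, P ∈ ℓ^{2,s}(ℤ), the sequence Q(k) := ∑_{(j₁,j₂,j₃)∈ℤ³, k−j₁+j₂−j₃=0} M_{j₁} N_{j₂} P_{j₃} is absolutely convergent for each k ∈ ℤ and satisfies sup_{k∈ℤ} |Q(k)| + ‖Q‖_{ℓ^{2,s}} ≤ C ‖M‖_{ℓ^{2,s}} ‖N‖_{ℓ^{2,s}} ‖P‖_{ℓ^{2,s}}. -/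
open scoped BigOperators

/-- Membership in the weighted space `ℓ^{2,s}(ℤ)`. -/
def wMem (s : ℝ) (a : ℤ → ℂ) : Prop :=
  Summable (fun k : ℤ => (1 + |(k : ℝ)|) ^ (2 * s) * ‖a k‖ ^ 2)

/-- The `ℓ^{2,s}(ℤ)` norm. -/
noncomputable def wnorm (s : ℝ) (a : ℤ → ℂ) : ℝ :=
  (∑' k : ℤ, (1 + |(k : ℝ)|) ^ (2 * s) * ‖a k‖ ^ 2) ^ (1 / 2 : ℝ)

/-- The triple convolution-type sum `Q(k) = ∑_{k - j₁ + j₂ - j₃ = 0} M_{j₁} N_{j₂} P_{j₃}`,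
parametrized by the two free indices `(j₁, j₂)`, with `j₃ = k - j₁ + j₂`. -/
noncomputable def tripleSum (M N P : ℤ → ℂ) (k : ℤ) : ℂ :=
  ∑' j : ℤ × ℤ, M j.1 * N j.2 * P (k - j.1 + j.2)

/-!
The weight `w k = (1 + |k|) ^ (2 * s)` satisfies `w (x + y) ≤ c (w x + w y)`, and `w⁻¹` is summable
because `2 * s > 1`; hence `w⁻¹ ⋆ w⁻¹ ≤ K w⁻¹`. Cauchy-Schwarz against `w⁻¹ ⋆ w⁻¹` then makes the
weighted `ℓ²` space a convolution algebra: `‖a ⋆ b‖² ≤ K ‖a‖² ‖b‖²`. Since `w` is even,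
`Q = M ⋆ (N ∘ Neg.neg) ⋆ P` is controlled by applying this twice to the absolute values of the
sequences, and `w ≥ 1` yields the bound on `sup |Q|`. All sums are taken in `ℝ≥0∞`, so that
convergence is a consequence of the estimates.
-/

open scoped ENNReal NNReal

lemma sq_tsum_mul_le_tsum_mul_tsum_mul_sq {ι : Type*} (v g : ι → ℝ≥0∞) :
    (∑' i, v i * g i) ^ 2 ≤ (∑' i, v i) * ∑' i, v i * g i ^ 2 := by
  have finite_bound (t : Finset ι) : ∑ i ∈ t, v i * g i ≤
      (∑' i, v i) ^ (1 / 2 : ℝ) * (∑' i, v i * g i ^ 2) ^ (1 / 2 : ℝ) := by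
    calc ∑ i ∈ t, v i * g i
        ≤ (∑ i ∈ t, v i) ^ (1 / 2 : ℝ) * (∑ i ∈ t, v i * g i ^ 2) ^ (1 / 2 : ℝ) := by
          have half : (1 : ℝ) - 2⁻¹ = 2⁻¹ := by norm_num
          simpa only [half, one_div, ENNReal.rpow_two] using
            ENNReal.inner_le_weight_mul_Lp_of_nonneg t one_le_two v g
      _ ≤ _ := by gcongr <;> exact ENNReal.sum_le_tsum t
  calc (∑' i, v i * g i) ^ 2
      ≤ ((∑' i, v i) ^ (1 / 2 : ℝ) * (∑' i, v i * g i ^ 2) ^ (1 / 2 : ℝ)) ^ 2 := by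
        gcongr
        exact ENNReal.summable.tsum_le_of_sum_le finite_bound
    _ = _ := by
        rw [mul_pow, ← ENNReal.rpow_mul_natCast, ← ENNReal.rpow_mul_natCast]
        norm_num

section WeightedNorm

variable {ι : Type*}

/-- The squared weighted norm `∑ k, w k * a k ^ 2`; the weight `w` is not squared, and the value is
`∞` off the weighted `ℓ²` space. -/
noncomputable def weightedSqNorm (w a : ι → ℝ≥0∞) : ℝ≥0∞ :=
  ∑' k, w k * a k ^ 2

lemma weightedSqNorm_mono (w : ι → ℝ≥0∞) {a b : ι → ℝ≥0∞} (h : ∀ k, a k ≤ b k) :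
    weightedSqNorm w a ≤ weightedSqNorm w b := by
  unfold weightedSqNorm
  gcongr with k
  exact h k

lemma le_of_weightedSqNorm_le_sq {w a : ι → ℝ≥0∞} {B : ℝ≥0∞} (hw : ∀ k, 1 ≤ w k)
    (h : weightedSqNorm w a ≤ B ^ 2) (k : ι) : a k ≤ B := by
  refine (ENNReal.pow_le_pow_left_iff two_ne_zero).1 ?_
  calc a k ^ 2 ≤ w k * a k ^ 2 := le_mul_of_one_le_left zero_le (hw k)
    _ ≤ weightedSqNorm w a := ENNReal.le_tsum k
    _ ≤ B ^ 2 := h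

end WeightedNorm

section Convolution

variable {G : Type*} [AddGroup G]

/-- The convolution `k ↦ ∑ j, f j * g (k - j)` of two `[0, ∞]`-valued functions on a discrete
group. -/
noncomputable def discreteConv (f g : G → ℝ≥0∞) (k : G) : ℝ≥0∞ :=
  ∑' j, f j * g (k - j)

lemma tsum_discreteConv (f g : G → ℝ≥0∞) :
    ∑' k, discreteConv f g k = (∑' j, f j) * ∑' j, g j := by
  have shift (j : G) : ∑' k, g (k - j) = ∑' k, g k := (Equiv.subRight j).tsum_eq g
  simp only [discreteConv]
  rw [ENNReal.tsum_comm]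
  simp only [ENNReal.tsum_mul_left, shift, ENNReal.tsum_mul_right]

lemma tsum_triple_eq_discreteConv (a b c : G → ℝ≥0∞) (k : G) :
    ∑' j : G × G, a j.1 * b j.2 * c (k - j.1 + j.2) =
      discreteConv a (discreteConv (fun j => b (-j)) c) k := by
  have reflect (x : G) : ∑' j, b j * c (x + j) = ∑' j, b (-j) * c (x - j) := by
    simpa only [Equiv.neg_apply, sub_eq_add_neg] using
      ((Equiv.neg G).tsum_eq fun j => b j * c (x + j)).symm
  simp only [discreteConv, ENNReal.tsum_prod', mul_assoc, ENNReal.tsum_mul_left, reflect]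

lemma weightedSqNorm_comp_neg {w : G → ℝ≥0∞} (hw : ∀ k, w (-k) = w k) (a : G → ℝ≥0∞) :
    weightedSqNorm w (fun k => a (-k)) = weightedSqNorm w a := by
  simpa only [weightedSqNorm, Equiv.neg_apply, hw] using
    (Equiv.neg G).tsum_eq fun k => w k * a k ^ 2

variable {w : G → ℝ≥0∞} {K : ℝ≥0∞}

lemma mul_discreteConv_sq_le (hw₀ : ∀ k, w k ≠ 0) (hw : ∀ k, w k ≠ ∞)
    (hK : ∀ k, w k * discreteConv w⁻¹ w⁻¹ k ≤ K) (a b : G → ℝ≥0∞) (k : G) :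
    w k * discreteConv a b k ^ 2 ≤
      K * discreteConv (fun j => w j * a j ^ 2) (fun j => w j * b j ^ 2) k := by
  have cancel (x : G) : (w x)⁻¹ * w x = 1 := ENNReal.inv_mul_cancel (hw₀ x) (hw x)
  let v (j : G) : ℝ≥0∞ := (w j)⁻¹ * (w (k - j))⁻¹
  let g (j : G) : ℝ≥0∞ := w j * a j * (w (k - j) * b (k - j))
  have hvg (j : G) : v j * g j = a j * b (k - j) := by
    calc v j * g j
        = ((w j)⁻¹ * w j) * ((w (k - j))⁻¹ * w (k - j)) * (a j * b (k - j)) := by ring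
      _ = a j * b (k - j) := by rw [cancel, cancel, one_mul, one_mul]
  have hvg_sq (j : G) : v j * g j ^ 2 = w j * a j ^ 2 * (w (k - j) * b (k - j) ^ 2) := by
    calc v j * g j ^ 2 = v j * g j * g j := by ring
      _ = w j * a j ^ 2 * (w (k - j) * b (k - j) ^ 2) := by rw [hvg]; ring
  have cauchy_schwarz := sq_tsum_mul_le_tsum_mul_tsum_mul_sq v g
  simp only [hvg, hvg_sq] at cauchy_schwarz
  calc w k * discreteConv a b k ^ 2
      ≤ w k * (discreteConv w⁻¹ w⁻¹ k *
          discreteConv (fun j => w j * a j ^ 2) (fun j => w j * b j ^ 2) k) := by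
        gcongr
        exact cauchy_schwarz
    _ ≤ _ := by
        rw [← mul_assoc]
        gcongr
        exact hK k

lemma weightedSqNorm_discreteConv_le (hw₀ : ∀ k, w k ≠ 0) (hw : ∀ k, w k ≠ ∞)
    (hK : ∀ k, w k * discreteConv w⁻¹ w⁻¹ k ≤ K) (a b : G → ℝ≥0∞) :
    weightedSqNorm w (discreteConv a b) ≤ K * weightedSqNorm w a * weightedSqNorm w b := by
  calc weightedSqNorm w (discreteConv a b)
      ≤ ∑' k, K * discreteConv (fun j => w j * a j ^ 2) (fun j => w j * b j ^ 2) k :=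
        ENNReal.tsum_le_tsum (mul_discreteConv_sq_le hw₀ hw hK a b)
    _ = K * weightedSqNorm w a * weightedSqNorm w b := by
        rw [ENNReal.tsum_mul_left, tsum_discreteConv, ← mul_assoc]
        rfl

lemma weightedSqNorm_triple_le (hw₀ : ∀ k, w k ≠ 0) (hw : ∀ k, w k ≠ ∞)
    (hK : ∀ k, w k * discreteConv w⁻¹ w⁻¹ k ≤ K) (hw_neg : ∀ k, w (-k) = w k)
    (a b c : G → ℝ≥0∞) :
    weightedSqNorm w (fun k => ∑' j : G × G, a j.1 * b j.2 * c (k - j.1 + j.2)) ≤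
      K ^ 2 * weightedSqNorm w a * weightedSqNorm w b * weightedSqNorm w c := by
  simp only [tsum_triple_eq_discreteConv]
  calc weightedSqNorm w (discreteConv a (discreteConv (fun j => b (-j)) c))
      ≤ K * weightedSqNorm w a * weightedSqNorm w (discreteConv (fun j => b (-j)) c) :=
        weightedSqNorm_discreteConv_le hw₀ hw hK _ _
    _ ≤ K * weightedSqNorm w a *
          (K * weightedSqNorm w (fun j => b (-j)) * weightedSqNorm w c) := by
        gcongr
        exact weightedSqNorm_discreteConv_le hw₀ hw hK _ _
    _ = K ^ 2 * weightedSqNorm w a * weightedSqNorm w b * weightedSqNorm w c := by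
        rw [weightedSqNorm_comp_neg hw_neg]
        ring

lemma mul_discreteConv_inv_le {c : ℝ≥0∞} (hadd : ∀ x y, w (x + y) ≤ c * (w x + w y)) (k : G) :
    w k * discreteConv w⁻¹ w⁻¹ k ≤ c * (2 * ∑' j, (w j)⁻¹) := by
  have reflect : ∑' j, (w (k - j))⁻¹ = ∑' j, (w j)⁻¹ :=
    (Equiv.subLeft k).tsum_eq fun j => (w j)⁻¹
  have termwise (j : G) :
      w k * ((w j)⁻¹ * (w (k - j))⁻¹) ≤ c * ((w j)⁻¹ + (w (k - j))⁻¹) := by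
    calc w k * ((w j)⁻¹ * (w (k - j))⁻¹)
        ≤ c * (w (k - j) + w j) * ((w j)⁻¹ * (w (k - j))⁻¹) := by
          gcongr
          simpa only [sub_add_cancel] using hadd (k - j) j
      _ = c * (w (k - j) * (w (k - j))⁻¹ * (w j)⁻¹ + w j * (w j)⁻¹ * (w (k - j))⁻¹) := by ring
      _ ≤ c * (1 * (w j)⁻¹ + 1 * (w (k - j))⁻¹) := by
          gcongr <;> exact ENNReal.mul_inv_le_one _
      _ = c * ((w j)⁻¹ + (w (k - j))⁻¹) := by rw [one_mul, one_mul]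
  calc w k * discreteConv w⁻¹ w⁻¹ k
      = ∑' j, w k * ((w j)⁻¹ * (w (k - j))⁻¹) := ENNReal.tsum_mul_left.symm
    _ ≤ ∑' j, c * ((w j)⁻¹ + (w (k - j))⁻¹) := ENNReal.tsum_le_tsum termwise
    _ = c * (2 * ∑' j, (w j)⁻¹) := by
        rw [ENNReal.tsum_mul_left, ENNReal.tsum_add, reflect, two_mul]

end Convolution

section PolynomialWeight

variable {E : Type*} [SeminormedAddGroup E]

/-- The weight `(1 + ‖x‖) ^ p`, valued in `[0, ∞]`; the norm of `ℓ^{2,s}` corresponds to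
`p = 2 * s`. -/
noncomputable def polyWeight (p : ℝ) (x : E) : ℝ≥0∞ :=
  (1 + ‖x‖ₑ) ^ p

lemma polyWeight_ne_zero (p : ℝ) (x : E) : polyWeight p x ≠ 0 := by
  simp [polyWeight, ENNReal.rpow_eq_zero_iff]

lemma polyWeight_ne_top (p : ℝ) (x : E) : polyWeight p x ≠ ∞ := by
  simp [polyWeight, ENNReal.rpow_eq_top_iff]

lemma polyWeight_neg (p : ℝ) (x : E) : polyWeight p (-x) = polyWeight p x := by
  rw [polyWeight, enorm_neg, polyWeight]

lemma one_le_polyWeight {p : ℝ} (hp : 0 ≤ p) (x : E) : 1 ≤ polyWeight p x := by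
  simpa only [polyWeight, ENNReal.one_rpow] using
    ENNReal.rpow_le_rpow (le_self_add : 1 ≤ 1 + ‖x‖ₑ) hp

lemma polyWeight_add_le {p : ℝ} (hp : 1 ≤ p) (x y : E) :
    polyWeight p (x + y) ≤ 2 ^ (p - 1) * (polyWeight p x + polyWeight p y) := by
  calc polyWeight p (x + y) ≤ ((1 + ‖x‖ₑ) + (1 + ‖y‖ₑ)) ^ p := by
        refine ENNReal.rpow_le_rpow ?_ (zero_le_one.trans hp)
        have enorm_add : ‖x + y‖ₑ ≤ ‖x‖ₑ + ‖y‖ₑ := by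
          simpa only [enorm_eq_nnnorm] using mod_cast nnnorm_add_le x y
        calc 1 + ‖x + y‖ₑ ≤ (1 + ‖x‖ₑ) + ‖y‖ₑ := by rw [add_assoc]; gcongr
          _ ≤ (1 + ‖x‖ₑ) + (1 + ‖y‖ₑ) := by gcongr; exact le_add_self
    _ ≤ 2 ^ (p - 1) * (polyWeight p x + polyWeight p y) :=
        ENNReal.rpow_add_le_mul_rpow_add_rpow _ _ hp

lemma polyWeight_eq_enorm (p : ℝ) (x : E) : polyWeight p x = ‖(1 + ‖x‖) ^ p‖ₑ := by
  have hpos : 0 < 1 + ‖x‖ := by positivity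
  rw [Real.enorm_of_nonneg (by positivity), ← ENNReal.ofReal_rpow_of_pos hpos,
    ENNReal.ofReal_add zero_le_one (norm_nonneg x), ENNReal.ofReal_one, ofReal_norm, polyWeight]

lemma exists_weightedSqNorm_polyWeight_triple_le {p : ℝ} (hp : 1 ≤ p)
    (hsum : ∑' x : E, (polyWeight p x)⁻¹ ≠ ∞) :
    ∃ K : ℝ≥0, 0 < K ∧ ∀ a b c : E → ℝ≥0∞,
      weightedSqNorm (polyWeight p)
          (fun k => ∑' j : E × E, a j.1 * b j.2 * c (k - j.1 + j.2)) ≤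
        K ^ 2 * weightedSqNorm (polyWeight p) a * weightedSqNorm (polyWeight p) b *
          weightedSqNorm (polyWeight p) c := by
  have finite : 2 ^ (p - 1) * (2 * ∑' x : E, (polyWeight p x)⁻¹) < ∞ := by finiteness
  obtain ⟨K, hK, -⟩ := ENNReal.lt_iff_exists_nnreal_btwn.1 finite
  refine ⟨K, ENNReal.coe_pos.1 (bot_le.trans_lt hK), weightedSqNorm_triple_le
    (polyWeight_ne_zero p) (polyWeight_ne_top p) (fun k => ?_) (polyWeight_neg p)⟩
  exact (mul_discreteConv_inv_le (polyWeight_add_le hp) k).trans hK.le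

lemma summable_inv_one_add_abs_int_rpow {p : ℝ} (hp : 1 < p) :
    Summable fun k : ℤ => ((1 + |(k : ℝ)|) ^ p)⁻¹ := by
  have nat_case : Summable fun n : ℕ => ((1 + (n : ℝ)) ^ p)⁻¹ := by
    refine ((Real.summable_one_div_nat_add_rpow 1 p).2 hp).congr fun n => ?_
    rw [one_div, abs_of_nonneg (by positivity), add_comm]
  exact .of_nat_of_neg (by simpa using nat_case) (by simpa using nat_case)

lemma tsum_inv_polyWeight_int_ne_top {p : ℝ} (hp : 1 < p) :
    ∑' k : ℤ, (polyWeight p k)⁻¹ ≠ ∞ := by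
  have h := tsum_enorm_ne_top_iff_summable_norm.2 (summable_inv_one_add_abs_int_rpow hp).norm
  convert h using 3 with k
  rw [polyWeight_eq_enorm, enorm_inv (by positivity), Int.norm_eq_abs]

end PolynomialWeight

section WeightedSequences

variable {s : ℝ} {a : ℤ → ℂ}

lemma wnorm_nonneg (s : ℝ) (a : ℤ → ℂ) : 0 ≤ wnorm s a := by
  unfold wnorm
  positivity

lemma polyWeight_mul_enorm_sq (s : ℝ) (a : ℤ → ℂ) (k : ℤ) :
    polyWeight (2 * s) k * ‖a k‖ₑ ^ 2 = ‖(1 + |(k : ℝ)|) ^ (2 * s) * ‖a k‖ ^ 2‖ₑ := by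
  rw [polyWeight_eq_enorm, enorm_mul, enorm_pow, enorm_norm, Int.norm_eq_abs]

lemma weightedSqNorm_ne_top_iff_wMem :
    weightedSqNorm (polyWeight (2 * s)) (fun k => ‖a k‖ₑ) ≠ ∞ ↔ wMem s a := by
  simp only [weightedSqNorm, polyWeight_mul_enorm_sq]
  exact tsum_enorm_ne_top_iff_summable_norm.trans summable_norm_iff

lemma weightedSqNorm_eq_wnorm_sq (ha : wMem s a) :
    weightedSqNorm (polyWeight (2 * s)) (fun k => ‖a k‖ₑ) = ENNReal.ofReal (wnorm s a) ^ 2 := by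
  have term_nonneg (k : ℤ) : 0 ≤ (1 + |(k : ℝ)|) ^ (2 * s) * ‖a k‖ ^ 2 := by positivity
  rw [← ENNReal.ofReal_pow (wnorm_nonneg s a), wnorm, ← Real.sqrt_eq_rpow,
    Real.sq_sqrt (tsum_nonneg term_nonneg), ENNReal.ofReal_tsum_of_nonneg term_nonneg ha]
  simp only [weightedSqNorm, polyWeight_mul_enorm_sq, Real.enorm_of_nonneg (term_nonneg _)]

lemma wMem_and_wnorm_le_of_weightedSqNorm_le {R : ℝ} (hR : 0 ≤ R)
    (h : weightedSqNorm (polyWeight (2 * s)) (fun k => ‖a k‖ₑ) ≤ ENNReal.ofReal R ^ 2) :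
    wMem s a ∧ wnorm s a ≤ R := by
  have ha : wMem s a := weightedSqNorm_ne_top_iff_wMem.1 (ne_top_of_le_ne_top (by finiteness) h)
  rw [weightedSqNorm_eq_wnorm_sq ha, ENNReal.pow_le_pow_left_iff two_ne_zero] at h
  exact ⟨ha, (ENNReal.ofReal_le_ofReal_iff hR).1 h⟩

lemma enorm_tripleSum_le (M N P : ℤ → ℂ) (k : ℤ) :
    ‖tripleSum M N P k‖ₑ ≤ ∑' j : ℤ × ℤ, ‖M j.1‖ₑ * ‖N j.2‖ₑ * ‖P (k - j.1 + j.2)‖ₑ := by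
  simpa only [tripleSum, enorm_mul] using
    enorm_tsum_le_tsum_enorm (f := fun j : ℤ × ℤ => M j.1 * N j.2 * P (k - j.1 + j.2))

lemma exists_weightedSqNorm_triple_enorm_le (hs : 1 / 2 < s) :
    ∃ K : ℝ, 0 < K ∧ ∀ M N P : ℤ → ℂ, wMem s M → wMem s N → wMem s P →
      weightedSqNorm (polyWeight (2 * s))
          (fun k => ∑' j : ℤ × ℤ, ‖M j.1‖ₑ * ‖N j.2‖ₑ * ‖P (k - j.1 + j.2)‖ₑ) ≤
        ENNReal.ofReal (K * wnorm s M * wnorm s N * wnorm s P) ^ 2 := by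
  have hp : 1 < 2 * s := by linarith
  obtain ⟨K, hK₀, hK⟩ :=
    exists_weightedSqNorm_polyWeight_triple_le hp.le (tsum_inv_polyWeight_int_ne_top hp)
  refine ⟨K, hK₀, fun M N P hM hN hP =>
    (hK (fun k => ‖M k‖ₑ) (fun k => ‖N k‖ₑ) (fun k => ‖P k‖ₑ)).trans_eq ?_⟩
  have nonneg := wnorm_nonneg s
  rw [weightedSqNorm_eq_wnorm_sq hM, weightedSqNorm_eq_wnorm_sq hN, weightedSqNorm_eq_wnorm_sq hP,
    ENNReal.ofReal_mul' (nonneg P), ENNReal.ofReal_mul' (nonneg N), ENNReal.ofReal_mul' (nonneg M),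
    ENNReal.ofReal_coe_nnreal, mul_pow, mul_pow, mul_pow]

end WeightedSequences

/-- For `s > 1/2`, the triple convolution of `ℓ^{2,s}` sequences along the set
`k - j₁ + j₂ - j₃ = 0` converges absolutely and satisfies
`sup_k |Q(k)| + ‖Q‖_{ℓ^{2,s}} ≤ C ‖M‖ ‖N‖ ‖P‖`. -/
theorem l2s_triple_convolution (s : ℝ) (hs : 1 / 2 < s) :
    ∃ C : ℝ, 0 < C ∧ ∀ M N P : ℤ → ℂ, wMem s M → wMem s N → wMem s P →
      (∀ k : ℤ, Summable (fun j : ℤ × ℤ => ‖M j.1 * N j.2 * P (k - j.1 + j.2)‖)) ∧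
      wMem s (tripleSum M N P) ∧
      ∀ k : ℤ, ‖tripleSum M N P k‖ + wnorm s (tripleSum M N P) ≤
        C * wnorm s M * wnorm s N * wnorm s P := by
  obtain ⟨K, hK₀, hK⟩ := exists_weightedSqNorm_triple_enorm_le hs
  refine ⟨2 * K, by positivity, fun M N P hM hN hP => ?_⟩
  have triple_bound := hK M N P hM hN hP
  set R : ℝ := K * wnorm s M * wnorm s N * wnorm s P with hR
  have hR₀ : 0 ≤ R := by
    have hM₀ := wnorm_nonneg s M
    have hN₀ := wnorm_nonneg s N
    have hP₀ := wnorm_nonneg s P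
    positivity
  have pointwise : ∀ k : ℤ,
      ∑' j : ℤ × ℤ, ‖M j.1‖ₑ * ‖N j.2‖ₑ * ‖P (k - j.1 + j.2)‖ₑ ≤ ENNReal.ofReal R :=
    le_of_weightedSqNorm_le_sq (one_le_polyWeight (by linarith)) triple_bound
  obtain ⟨hQ, hQ_norm⟩ := wMem_and_wnorm_le_of_weightedSqNorm_le hR₀
    ((weightedSqNorm_mono _ (enorm_tripleSum_le M N P)).trans triple_bound)
  refine ⟨fun k => ?_, hQ, fun k => ?_⟩
  · rw [← tsum_enorm_ne_top_iff_summable_norm]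
    simpa only [enorm_mul] using ne_top_of_le_ne_top ENNReal.ofReal_ne_top (pointwise k)
  · have hQ_sup : ‖tripleSum M N P k‖ ≤ R := by
      rw [← ENNReal.ofReal_le_ofReal_iff hR₀, ofReal_norm]
      exact (enorm_tripleSum_le M N P k).trans (pointwise k)
    calc ‖tripleSum M N P k‖ + wnorm s (tripleSum M N P) ≤ R + R := add_le_add hQ_sup hQ_norm
      _ = 2 * K * wnorm s M * wnorm s N * wnorm s P := by rw [hR]; ring
end

section
/- Let s > 1/2, 0 < t₁ < t₂, M ∈ ℝ, ε ∈ {+1,−1}, and let A : (t₁,t₂) → ℓ^{2,s}(ℤ) be continuously differentiable as a map into the Banach space ℓ^{2,s}(ℤ), such that each component satisfies i A_k'(t) = ε (1/(8πt)) ∑_{(j₁,j₂,j₃)∈ℤ³, k−j₁+j₂−j₃=0} e^{−i(k²−j₁²+j₂²−j₃²)/(4t)} A_{j₁}(t) \overline{A_{j₂}(t)} A_{j₃}(t) − (M/(4πt)) A_k(t). Then for every bounded function a : ℤ → ℝ, the function t ↦ ∑_{k∈ℤ} a(k)|A_k(t)|² is differentiable on (t₁,t₂) and d/dt ∑_k a(k)|A_k(t)|²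 = (ε/(16π i t)) ∑_{k−j₁+j₂−j₃=0} (a(k) − a(j₁) + a(j₂) − a(j₃)) e^{−i(k²−j₁²+j₂²−j₃²)/(4t)} A_{j₁}(t) \overline{A_{j₂}(t)} A_{j₃}(t) \overline{A_k(t)}. -/
open scoped BigOperators
open Set

/-- The cubic interaction sum `∑_{k-j₁+j₂-j₃=0} e^{-i(k²-j₁²+j₂²-j₃²)/(4t)} A_{j₁} conj(A_{j₂}) A_{j₃}`,
parametrized by the two free indices `(j₁, j₂)`, with `j₃ = k - j₁ + j₂`. -/
noncomputable def cubicSum (A : ℤ → ℂ) (t : ℝ) (k : ℤ) : ℂ :=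
  ∑' j : ℤ × ℤ,
    Complex.exp (-Complex.I *
        ((k ^ 2 - j.1 ^ 2 + j.2 ^ 2 - (k - j.1 + j.2) ^ 2 : ℤ) : ℂ) / (4 * (t : ℂ)))
      * A j.1 * (starRingEnd ℂ) (A j.2) * A (k - j.1 + j.2)

/-- `A : (t₁,t₂) → ℓ^{2,s}` is continuously differentiable as a map into the Banach
space `ℓ^{2,s}(ℤ)`: the weighted sequence `k ↦ (1+|k|)^s A_k(t)` defines a `C¹` curve in `ℓ²`. -/
def C1IntoL2s (s t₁ t₂ : ℝ) (A : ℝ → ℤ → ℂ) : Prop :=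
  ∃ B : ℝ → lp (fun _ : ℤ => ℂ) 2,
    (∀ t ∈ Ioo t₁ t₂, ∀ k : ℤ, B t k = ((1 + |(k : ℝ)|) ^ s : ℝ) * A t k) ∧
    ContDiffOn ℝ 1 B (Ioo t₁ t₂)

/-!
Multiplying `A_j` by the chirp `e^{ij²/(4t)}` absorbs the phases, so that pairing the cubic sum with
`conj A_k` leaves the terms `Q(k,j₁,j₂) = v_{j₁} conj(v_{j₂}) v_{j₃} conj(v_k)` with `v ∈ ℓ¹`.
Differentiating the bounded quadratic form `∑ a(k)|A_k|²` on `ℓ²` gives a multiple of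
`Im ∑ a(k) Q(k,j₁,j₂)`; the real multiple `M / (4πt)` of `A_k` only rotates `A_k` and drops out.
Since `Q` is invariant under `k ↔ j₂` and conjugated by `(k, j₂) ↔ (j₁, j₃)`, replacing `a(k)` by
`a(j₂)` preserves the sum, while `a(j₁)` and `a(j₃)` produce its conjugate: the alternating
combination of the four weights is `4i` times the imaginary part.
-/

open Filter Topology ComplexConjugate

section SquareSummable

variable {ι : Type*} {E : ι → Type*} [∀ i, NormedAddCommGroup (E i)]

/-- The diagonal operator `(x_i) ↦ (c_i x_i)` on `ℓ^p`, for a real multiplier bounded by `C`. It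
serves both to remove the weight of `ℓ^{2,s}` and to represent the form `∑ a(k)|A_k|²`. -/
noncomputable def lpDiagonal [∀ i, NormedSpace ℝ (E i)] (p : ENNReal) [Fact (1 ≤ p)]
    {c : ι → ℝ} {C : ℝ} (hc : ∀ i, |c i| ≤ C) : lp E p →L[ℝ] lp E p :=
  lp.mapCLM p (fun i => c i • ContinuousLinearMap.id ℝ (E i)) (abs_nonneg C) fun i => by
    calc ‖c i • ContinuousLinearMap.id ℝ (E i)‖
        ≤ |c i| * 1 := by
          rw [norm_smul, Real.norm_eq_abs]
          gcongr
          exact ContinuousLinearMap.norm_id_le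
      _ ≤ |C| := by simpa using (hc i).trans (le_abs_self C)

@[simp]
lemma lpDiagonal_apply [∀ i, NormedSpace ℝ (E i)] {p : ENNReal} [Fact (1 ≤ p)]
    {c : ι → ℝ} {C : ℝ} (hc : ∀ i, |c i| ≤ C) (x : lp E p) (i : ι) :
    lpDiagonal p hc x i = c i • x i :=
  rfl

lemma hasDerivAt_tsum_mul_norm_sq [∀ i, InnerProductSpace ℝ (E i)]
    {a : ι → ℝ} {C : ℝ} (ha : ∀ i, |a i| ≤ C) {u : ℝ → lp E 2} {u' : lp E 2} {t : ℝ}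
    (hu : HasDerivAt u u' t) :
    HasDerivAt (fun τ => ∑' i, a i * ‖u τ i‖ ^ 2) (∑' i, a i * (2 * inner ℝ (u t i) (u' i))) t := by
  have hLu : HasDerivAt (fun τ => lpDiagonal 2 ha (u τ)) (lpDiagonal 2 ha u') t :=
    (lpDiagonal 2 ha).hasFDerivAt.comp_hasDerivAt t hu
  convert! hu.inner ℝ hLu using 1
  · ext τ
    simp [lp.inner_eq_tsum, inner_smul_right]
  · rw [lp.inner_eq_tsum, lp.inner_eq_tsum,
      ← (lp.summable_inner _ _).tsum_add (lp.summable_inner _ _)]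
    refine tsum_congr fun i => ?_
    rw [lpDiagonal_apply, lpDiagonal_apply, inner_smul_right, inner_smul_right,
      real_inner_comm (u t i) (u' i)]
    ring

end SquareSummable

lemma summable_one_add_abs_int_rpow {b : ℝ} (hb : 1 < b) :
    Summable fun k : ℤ => (1 + |(k : ℝ)|) ^ (-b) := by
  refine (Real.summable_abs_int_rpow hb).of_norm_bounded_eventually ?_
  filter_upwards [eventually_cofinite_ne 0] with k hk
  have hk' : 0 < |(k : ℝ)| := by positivity
  rw [Real.norm_of_nonneg (by positivity)]
  exact Real.rpow_le_rpow_of_nonpos hk' (by linarith) (by linarith)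

lemma wMem.summable_norm {s : ℝ} {A : ℤ → ℂ} (hA : wMem s A) (hs : 1 / 2 < s) :
    Summable fun k => ‖A k‖ := by
  have hweight := summable_one_add_abs_int_rpow (b := 2 * s) (by linarith)
  refine (hweight.add hA).of_nonneg_of_le (fun k => norm_nonneg _) fun k => ?_
  have hpos : 0 < 1 + |(k : ℝ)| := by positivity
  set w := (1 + |(k : ℝ)|) ^ s with hw
  have hw0 : 0 < w := Real.rpow_pos_of_pos hpos s
  have hw2 : (1 + |(k : ℝ)|) ^ (2 * s) = w ^ 2 := by
    rw [hw, mul_comm, ← Real.rpow_mul_natCast hpos.le s 2, Nat.cast_two]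
  rw [Real.rpow_neg hpos.le, hw2]
  calc ‖A k‖ ≤ 2 * w⁻¹ * (w * ‖A k‖) := by
        rw [mul_assoc, inv_mul_cancel_left₀ hw0.ne']
        linarith [norm_nonneg (A k)]
    _ ≤ w⁻¹ ^ 2 + (w * ‖A k‖) ^ 2 := two_mul_le_add_sq _ _
    _ = (w ^ 2)⁻¹ + w ^ 2 * ‖A k‖ ^ 2 := by rw [inv_pow, mul_pow]

lemma C1IntoL2s.exists_differentiableAt_lp_two {s t₁ t₂ t : ℝ} {A : ℝ → ℤ → ℂ}
    (hA : C1IntoL2s s t₁ t₂ A) (hs : 0 ≤ s) (ht : t ∈ Ioo t₁ t₂) :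
    ∃ B : ℝ → lp (fun _ : ℤ => ℂ) 2, (∀ᶠ τ in 𝓝 t, ⇑(B τ) = A τ) ∧ DifferentiableAt ℝ B t := by
  obtain ⟨B, hBA, hB⟩ := hA
  have hnhds : Ioo t₁ t₂ ∈ 𝓝 t := Ioo_mem_nhds ht.1 ht.2
  have hweight (k : ℤ) : 1 ≤ (1 + |(k : ℝ)|) ^ s :=
    Real.one_le_rpow (by linarith [abs_nonneg (k : ℝ)]) hs
  have hinv (k : ℤ) : |((1 + |(k : ℝ)|) ^ s)⁻¹| ≤ 1 := by
    rw [abs_of_nonneg (by positivity)]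
    exact inv_le_one_of_one_le₀ (hweight k)
  refine ⟨fun τ => lpDiagonal 2 hinv (B τ), ?_, ?_⟩
  · filter_upwards [hnhds] with τ hτ
    ext k
    have hne : (1 + |(k : ℝ)|) ^ s ≠ 0 := (zero_lt_one.trans_le (hweight k)).ne'
    rw [lpDiagonal_apply, hBA τ hτ k, ← Complex.real_smul, inv_smul_smul₀ hne]
  · exact (lpDiagonal 2 hinv).differentiableAt.comp t
      ((hB.contDiffAt hnhds).differentiableAt one_ne_zero)

section QuarticTerm

variable {G : Type*}

/-- The exchange `k ↔ j₂` on triples `(k, j₁, j₂)`, which fixes `j₁` and `j₃`. -/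
def swapOuter : Equiv.Perm (G × G × G) :=
  Function.Involutive.toPerm (fun q => (q.2.2, q.2.1, q.1)) fun _ => rfl

lemma swapOuter_apply (k j₁ j₂ : G) : swapOuter (k, j₁, j₂) = (j₂, j₁, k) :=
  rfl

variable [AddCommGroup G]

/-- The summand `v_{j₁} conj(v_{j₂}) v_{j₃} conj(v_k)` of the quartic form of a four-wave
interaction, indexed by the free frequencies `q = (k, j₁, j₂)`, with `j₃ = k - j₁ + j₂`. -/
def quarticTerm (v : G → ℂ) (q : G × G × G) : ℂ :=
  v q.2.1 * conj (v q.2.2) * v (q.1 - q.2.1 + q.2.2) * conj (v q.1)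

/-- The simultaneous exchange `k ↔ j₁`, `j₂ ↔ j₃` on triples `(k, j₁, j₂)`. -/
def swapPairs : Equiv.Perm (G × G × G) :=
  Function.Involutive.toPerm (fun q => (q.2.1, q.1, q.1 - q.2.1 + q.2.2)) fun q => by
    ext <;> dsimp only; abel

lemma swapPairs_apply (k j₁ j₂ : G) : swapPairs (k, j₁, j₂) = (j₁, k, k - j₁ + j₂) :=
  rfl

lemma quarticTerm_swapOuter (v : G → ℂ) (q : G × G × G) :
    quarticTerm v (swapOuter q) = quarticTerm v q := by
  obtain ⟨k, j₁, j₂⟩ := q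
  have hj₃ : j₂ - j₁ + k = k - j₁ + j₂ := by abel
  simp only [quarticTerm, swapOuter_apply, hj₃]
  ring

lemma quarticTerm_swapPairs (v : G → ℂ) (q : G × G × G) :
    quarticTerm v (swapPairs q) = conj (quarticTerm v q) := by
  obtain ⟨k, j₁, j₂⟩ := q
  have hj₂ : j₁ - k + (k - j₁ + j₂) = j₂ := by abel
  simp only [quarticTerm, swapPairs_apply, hj₂, map_mul, Complex.conj_conj]
  ring

lemma tsum_swapOuter_mul_quarticTerm (w : G × G × G → ℝ) (v : G → ℂ) :
    ∑' q, (w (swapOuter q) : ℂ) * quarticTerm v q = ∑' q, (w q : ℂ) * quarticTerm v q := by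
  rw [← swapOuter.tsum_eq fun q => (w q : ℂ) * quarticTerm v q]
  simp only [quarticTerm_swapOuter]

lemma tsum_swapPairs_mul_quarticTerm (w : G × G × G → ℝ) (v : G → ℂ) :
    ∑' q, (w (swapPairs q) : ℂ) * quarticTerm v q =
      conj (∑' q, (w q : ℂ) * quarticTerm v q) := by
  rw [← swapPairs.tsum_eq fun q => (w q : ℂ) * quarticTerm v q, Complex.conj_tsum]
  simp only [quarticTerm_swapPairs, map_mul, Complex.conj_ofReal, Complex.conj_conj]

lemma summable_norm_quarticTerm {v : G → ℂ} (hv : Summable fun k => ‖v k‖) :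
    Summable fun q => ‖quarticTerm v q‖ := by
  refine ((hv.mul_norm (hv.mul_norm hv)).mul_left (∑' k, ‖v k‖)).of_nonneg_of_le
    (fun _ => norm_nonneg _) fun q => ?_
  calc ‖quarticTerm v q‖
      = ‖v (q.1 - q.2.1 + q.2.2)‖ * ‖v q.1 * (v q.2.1 * v q.2.2)‖ := by
        simp only [quarticTerm, norm_mul, RCLike.norm_conj]
        ring
    _ ≤ (∑' k, ‖v k‖) * ‖v q.1 * (v q.2.1 * v q.2.2)‖ := by
        gcongr
        exact hv.le_tsum _ fun _ _ => norm_nonneg _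

lemma summable_mul_quarticTerm {v : G → ℂ} (hv : Summable fun k => ‖v k‖)
    {w : G × G × G → ℝ} {C : ℝ} (hw : ∀ q, |w q| ≤ C) :
    Summable fun q => (w q : ℂ) * quarticTerm v q := by
  refine .of_norm_bounded ((summable_norm_quarticTerm hv).mul_left C) fun q => ?_
  rw [norm_mul, Complex.norm_real]
  exact mul_le_mul_of_nonneg_right (hw q) (norm_nonneg _)

theorem tsum_alternating_mul_quarticTerm {v : G → ℂ} (hv : Summable fun k => ‖v k‖)
    {a : G → ℝ} {C : ℝ} (ha : ∀ k, |a k| ≤ C) :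
    ∑' q : G × G × G,
        ((a q.1 - a q.2.1 + a q.2.2 - a (q.1 - q.2.1 + q.2.2) : ℝ) : ℂ) * quarticTerm v q =
      4 * Complex.I * ((∑' q : G × G × G, (a q.1 : ℂ) * quarticTerm v q).im : ℂ) := by
  set T := ∑' q : G × G × G, (a q.1 : ℂ) * quarticTerm v q
  have hsum (j : G × G × G → G) : Summable fun q => (a (j q) : ℂ) * quarticTerm v q :=
    summable_mul_quarticTerm hv fun q => ha (j q)
  have hj₁ : ∑' q : G × G × G, (a q.2.1 : ℂ) * quarticTerm v q = conj T :=
    tsum_swapPairs_mul_quarticTerm (fun q => a q.1) v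
  have hj₂ : ∑' q : G × G × G, (a q.2.2 : ℂ) * quarticTerm v q = T :=
    tsum_swapOuter_mul_quarticTerm (fun q => a q.1) v
  have hj₃ : ∑' q : G × G × G, (a (q.1 - q.2.1 + q.2.2) : ℂ) * quarticTerm v q = conj T := by
    rw [← hj₂]
    exact tsum_swapPairs_mul_quarticTerm (fun q => a q.2.2) v
  simp only [Complex.ofReal_sub, Complex.ofReal_add, add_mul, sub_mul]
  rw [(((hsum _).sub (hsum _)).add (hsum _)).tsum_sub (hsum _),
    ((hsum _).sub (hsum _)).tsum_add (hsum _), (hsum _).tsum_sub (hsum _), hj₁, hj₂, hj₃]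
  calc T - conj T + T - conj T = 2 * (T - conj T) := by ring
    _ = 4 * Complex.I * (T.im : ℂ) := by
      rw [Complex.sub_conj]
      push_cast
      ring

end QuarticTerm

/-- The sequence `e^{ij²/(4t)} A_j`, in terms of which the oscillating factors of `cubicSum A t`
disappear. -/
noncomputable def chirp (t : ℝ) (A : ℤ → ℂ) (j : ℤ) : ℂ :=
  Complex.exp (((j ^ 2 / (4 * t) : ℝ) : ℂ) * Complex.I) * A j

lemma norm_chirp (t : ℝ) (A : ℤ → ℂ) (j : ℤ) : ‖chirp t A j‖ = ‖A j‖ := by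
  rw [chirp, norm_mul, Complex.norm_exp_ofReal_mul_I, one_mul]

lemma conj_chirp (t : ℝ) (A : ℤ → ℂ) (j : ℤ) :
    conj (chirp t A j) = Complex.exp (-((j ^ 2 / (4 * t) : ℝ) : ℂ) * Complex.I) * conj (A j) := by
  rw [chirp, map_mul, ← Complex.exp_conj, map_mul, Complex.conj_ofReal, Complex.conj_I, mul_neg,
    neg_mul]

lemma quarticTerm_chirp (t : ℝ) (A : ℤ → ℂ) (q : ℤ × ℤ × ℤ) :
    quarticTerm (chirp t A) q =
      Complex.exp (-Complex.I *
          ((q.1 ^ 2 - q.2.1 ^ 2 + q.2.2 ^ 2 - (q.1 - q.2.1 + q.2.2) ^ 2 : ℤ) : ℂ)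
            / (4 * (t : ℂ))) *
        A q.2.1 * conj (A q.2.2) * A (q.1 - q.2.1 + q.2.2) * conj (A q.1) := by
  obtain ⟨k, j₁, j₂⟩ := q
  set j₃ := k - j₁ + j₂ with hj₃
  have hphase : -Complex.I * ((k ^ 2 - j₁ ^ 2 + j₂ ^ 2 - j₃ ^ 2 : ℤ) : ℂ) / (4 * (t : ℂ)) =
      ((j₁ ^ 2 / (4 * t) : ℝ) : ℂ) * Complex.I + -((j₂ ^ 2 / (4 * t) : ℝ) : ℂ) * Complex.I +
        ((j₃ ^ 2 / (4 * t) : ℝ) : ℂ) * Complex.I + -((k ^ 2 / (4 * t) : ℝ) : ℂ) * Complex.I := by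
    push_cast
    ring
  simp only [quarticTerm, conj_chirp, ← hj₃]
  rw [hphase, Complex.exp_add, Complex.exp_add, Complex.exp_add, chirp, chirp]
  ring

lemma hasSum_mul_cubicSum_mul_conj (t : ℝ) {A : ℤ → ℂ} (hA : Summable fun k => ‖A k‖)
    {a : ℤ → ℝ} {C : ℝ} (ha : ∀ k, |a k| ≤ C) :
    HasSum (fun k => (a k : ℂ) * (cubicSum A t k * conj (A k)))
      (∑' q : ℤ × ℤ × ℤ, (a q.1 : ℂ) * quarticTerm (chirp t A) q) := by
  have hsum : Summable fun q : ℤ × ℤ × ℤ => (a q.1 : ℂ) * quarticTerm (chirp t A) q :=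
    summable_mul_quarticTerm (by simpa only [norm_chirp] using hA) fun q => ha q.1
  convert! hsum.hasSum.prod_fiberwise fun k => (hsum.prod_factor k).hasSum using 2 with k
  simp only [cubicSum, quarticTerm_chirp, ← tsum_mul_right, ← tsum_mul_left]

lemma inner_eq_mul_im_of_I_mul_eq {z z' N : ℂ} {r m : ℝ}
    (h : Complex.I * z' = r * N - m * z) : inner ℝ z z' = r * (N * conj z).im := by
  calc inner ℝ z z' = (Complex.I * z' * conj z).im := by
        rw [Complex.inner, mul_assoc, Complex.I_mul_im, mul_comm]
    _ = (r * (N * conj z) - (m * ‖z‖ ^ 2 : ℝ)).im := by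
        rw [h, sub_mul, mul_assoc, mul_assoc, Complex.mul_conj']
        push_cast
        rfl
    _ = r * (N * conj z).im := by
        rw [Complex.sub_im, Complex.ofReal_im, Complex.im_ofReal_mul, sub_zero]

lemma tsum_mul_inner_eq_of_ode {t r m : ℝ} {A A' : ℤ → ℂ} (hA : Summable fun k => ‖A k‖)
    (hode : ∀ k, Complex.I * A' k = r * cubicSum A t k - m * A k)
    {a : ℤ → ℝ} {C : ℝ} (ha : ∀ k, |a k| ≤ C) :
    ∑' k, a k * (2 * inner ℝ (A k) (A' k)) =
      2 * r * (∑' q : ℤ × ℤ × ℤ, (a q.1 : ℂ) * quarticTerm (chirp t A) q).im := by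
  have him := Complex.hasSum_im (hasSum_mul_cubicSum_mul_conj t hA ha)
  rw [← him.tsum_eq, ← tsum_mul_left]
  refine tsum_congr fun k => ?_
  rw [inner_eq_mul_im_of_I_mul_eq (hode k), Complex.im_ofReal_mul]
  ring

theorem weighted_conservation_law_general {t M ε : ℝ} (ht : t ≠ 0) {A : ℝ → ℤ → ℂ}
    {B : ℝ → lp (fun _ : ℤ => ℂ) 2} (hBA : ∀ᶠ τ in 𝓝 t, ⇑(B τ) = A τ)
    (hB : DifferentiableAt ℝ B t) (hA : Summable fun k => ‖A t k‖)
    (hode : ∀ k : ℤ, Complex.I * deriv (fun τ : ℝ => A τ k) t =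
      (ε : ℂ) * (1 / (8 * (Real.pi : ℂ) * t)) * cubicSum (A t) t k
        - ((M : ℂ) / (4 * (Real.pi : ℂ) * t)) * A t k)
    {a : ℤ → ℝ} {C : ℝ} (ha : ∀ k, |a k| ≤ C) :
    ∃ D : ℝ, HasDerivAt (fun τ : ℝ => ∑' k : ℤ, a k * ‖A τ k‖ ^ 2) D t ∧
      (D : ℂ) = (ε : ℂ) / (16 * (Real.pi : ℂ) * Complex.I * t) *
        ∑' q : ℤ × ℤ × ℤ,
          ((a q.1 - a q.2.1 + a q.2.2 - a (q.1 - q.2.1 + q.2.2) : ℝ) : ℂ) *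
          Complex.exp (-Complex.I *
            ((q.1 ^ 2 - q.2.1 ^ 2 + q.2.2 ^ 2 - (q.1 - q.2.1 + q.2.2) ^ 2 : ℤ) : ℂ)
              / (4 * (t : ℂ))) *
          A t q.2.1 * conj (A t q.2.2) * A t (q.1 - q.2.1 + q.2.2) * conj (A t q.1) := by
  set r : ℝ := ε / (8 * Real.pi * t) with hr
  have hderiv (k : ℤ) : deriv (fun τ => A τ k) t = deriv B t k :=
    (((lp.evalCLM ℝ (fun _ : ℤ => ℂ) 2 k).hasFDerivAt.comp_hasDerivAt t
      hB.hasDerivAt).congr_of_eventuallyEq (hBA.mono fun τ hτ => (congrFun hτ k).symm)).deriv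
  have hode' (k : ℤ) : Complex.I * deriv B t k =
      r * cubicSum (A t) t k - (M / (4 * Real.pi * t) : ℝ) * A t k := by
    rw [← hderiv, hode, hr]
    push_cast
    ring
  refine ⟨∑' k, a k * (2 * inner ℝ (A t k) (deriv B t k)), ?_, ?_⟩
  · rw [← hBA.self_of_nhds]
    exact (hasDerivAt_tsum_mul_norm_sq ha hB.hasDerivAt).congr_of_eventuallyEq
      (hBA.mono fun τ hτ => tsum_congr fun k => by rw [congrFun hτ k])
  · have hchirp : Summable fun k => ‖chirp t (A t) k‖ := by simpa only [norm_chirp] using hA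
    have ht' : (t : ℂ) ≠ 0 := Complex.ofReal_ne_zero.mpr ht
    calc ((∑' k, a k * (2 * inner ℝ (A t k) (deriv B t k)) : ℝ) : ℂ)
        = (ε : ℂ) / (16 * (Real.pi : ℂ) * Complex.I * t) * (4 * Complex.I *
            ((∑' q : ℤ × ℤ × ℤ, (a q.1 : ℂ) * quarticTerm (chirp t (A t)) q).im : ℂ)) := by
          rw [tsum_mul_inner_eq_of_ode hA hode' ha, hr]
          push_cast
          field_simp
          ring
      _ = (ε : ℂ) / (16 * (Real.pi : ℂ) * Complex.I * t) * ∑' q : ℤ × ℤ × ℤ,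
            ((a q.1 - a q.2.1 + a q.2.2 - a (q.1 - q.2.1 + q.2.2) : ℝ) : ℂ) *
              quarticTerm (chirp t (A t)) q := by
          rw [tsum_alternating_mul_quarticTerm hchirp ha]
      _ = _ := by simp only [quarticTerm_chirp, mul_assoc]

/-- Conservation law with weights: for a `C¹`-in-`ℓ^{2,s}` solution of the coefficient system,
for any bounded real sequence `a`, the quantity `∑_k a(k)|A_k(t)|²` is differentiable with the
stated symmetrized derivative. -/
theorem weighted_conservation_law (s t₁ t₂ M ε : ℝ) (hs : 1 / 2 < s)
    (ht₁ : 0 < t₁) (ht : t₁ < t₂) (hε : ε = 1 ∨ ε = -1)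
    (A : ℝ → ℤ → ℂ)
    (hmem : ∀ t ∈ Ioo t₁ t₂, wMem s (A t))
    (hC1 : C1IntoL2s s t₁ t₂ A)
    (hode : ∀ t ∈ Ioo t₁ t₂, ∀ k : ℤ,
      Complex.I * deriv (fun τ : ℝ => A τ k) t =
        (ε : ℂ) * (1 / (8 * (Real.pi : ℂ) * t)) * cubicSum (A t) t k
          - ((M : ℂ) / (4 * (Real.pi : ℂ) * t)) * A t k) :
    ∀ a : ℤ → ℝ, (∃ Ca : ℝ, ∀ k : ℤ, |a k| ≤ Ca) →
      ∀ t ∈ Ioo t₁ t₂, ∃ D : ℝ,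
        HasDerivAt (fun τ : ℝ => ∑' k : ℤ, a k * ‖A τ k‖ ^ 2) D t ∧
        (D : ℂ) = (ε : ℂ) / (16 * (Real.pi : ℂ) * Complex.I * t) *
          ∑' q : ℤ × ℤ × ℤ,
            ((a q.1 - a q.2.1 + a q.2.2 - a (q.1 - q.2.1 + q.2.2) : ℝ) : ℂ) *
            Complex.exp (-Complex.I *
              ((q.1 ^ 2 - q.2.1 ^ 2 + q.2.2 ^ 2 - (q.1 - q.2.1 + q.2.2) ^ 2 : ℤ) : ℂ)
                / (4 * (t : ℂ))) *
            A t q.2.1 * (starRingEnd ℂ) (A t q.2.2) * A t (q.1 - q.2.1 + q.2.2) *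
            (starRingEnd ℂ) (A t q.1) := by
  rintro a ⟨C, ha⟩ t htI
  obtain ⟨B, hBA, hB⟩ := hC1.exists_differentiableAt_lp_two (by linarith) htI
  exact weighted_conservation_law_general (ht₁.trans htI.1).ne' hBA hB
    ((hmem t htI).summable_norm hs) (hode t htI) ha
end

section
/- Let 1 ≤ p < ∞. There exists a constant C = C(p) such that for all M, N, P ∈ ℓ^p(ℤ), the sequence k ↦ ∑_{(j₁,j₂,j₃)∈NR_k} M_{j₁} N_{j₂} P_{j₃}/(k² − j₁² + j₂² − j₃²) is absolutely convergent for each k ∈ ℤ and its ℓ^p(ℤ) norm is at most C ‖M‖_{ℓ^p} ‖N‖_{ℓ^p} ‖P‖_{ℓ^p}. -/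
open scoped BigOperators

/-- The non-resonant triple sum with the non-resonant denominator
`k² - j₁² + j₂² - j₃²`, parametrized by the two free indices `(j₁, j₂)` with
`j₃ = k - j₁ + j₂`.  Since in `ℂ` division by zero gives `0`, the terms with vanishing
denominator (the resonant ones, excluded from `NR_k`) contribute nothing. -/
noncomputable def nrQuotientSum (M N P : ℤ → ℂ) (k : ℤ) : ℂ :=
  ∑' j : ℤ × ℤ,
    M j.1 * N j.2 * P (k - j.1 + j.2) /
      ((k ^ 2 - j.1 ^ 2 + j.2 ^ 2 - (k - j.1 + j.2) ^ 2 : ℤ) : ℂ)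

/-!
Put `a = k - j₁` and `b = j₁ - j₂`. The denominator becomes `2ab`, and the numerator becomes
`M_{k-a} N_{k-a-b} P_{k-b}`. The weight `(2ab)⁻¹` lies in `ℓ^q(ℤ²)` for every `q > 1`, in particular
for the exponent conjugate to `p < ∞`, so Hölder's inequality in `(a, b)` bounds the `p`-th power of
the sum at `k` by a constant times `∑_{a,b} |M_{k-a} N_{k-a-b} P_{k-b}|^p`. Since
`(k, a, b) ↦ (k-a, k-a-b, k-b)` is a bijection of `ℤ³`, summing over `k` gives exactly
`‖M‖^p ‖N‖^p ‖P‖^p`.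
-/

open scoped ENNReal

section Holder

variable {ι 𝕜 : Type*} [RCLike 𝕜] {p q : ℝ≥0∞} [p.HolderConjugate q]

theorem summable_norm_lp_mul (f : lp (fun _ : ι ↦ 𝕜) p) (g : lp (fun _ : ι ↦ 𝕜) q) :
    Summable fun i ↦ ‖f i * g i‖ := by
  have h : Memℓp (fun i ↦ f i * g i) 1 :=
    (lp.memℓp f).holder 1 (lp.memℓp g) (fun _ ↦ .mul 𝕜 𝕜)
      fun _ ↦ ContinuousLinearMap.opNorm_mul_le 𝕜 𝕜
  simpa using h.summable

theorem norm_tsum_lp_mul_le (f : lp (fun _ : ι ↦ 𝕜) p) (g : lp (fun _ : ι ↦ 𝕜) q) :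
    ‖∑' i, f i * g i‖ ≤ ‖f‖ * ‖g‖ := by
  have : Fact (1 ≤ p) := ⟨ENNReal.HolderConjugate.one_le p q⟩
  have : Fact (1 ≤ q) := ⟨ENNReal.HolderConjugate.one_le q p⟩
  have hmul (_ : ι) : ‖ContinuousLinearMap.mul 𝕜 𝕜‖ ≤ (1 : NNReal) :=
    ContinuousLinearMap.opNorm_mul_le 𝕜 𝕜
  simpa [lp.dualPairing_apply] using
    (lp.dualPairing p q _ hmul).le_of_opNorm₂_le_of_le (lp.norm_dualPairing _ hmul) le_rfl le_rfl

end Holder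

section Parallelogram

variable {G : Type*} [AddCommGroup G]

/-- The product of `f`, `g`, `h` over the vertices other than `k` of the parallelogram with vertex
`k` and sides `a.1`, `a.2`. The vertices `j₁ = k - a.1`, `j₂ = k - a.1 - a.2`, `j₃ = k - a.2`
parametrize the solutions of `k - j₁ + j₂ - j₃ = 0`. -/
def parallelogramProd {R : Type*} [Mul R] (f g h : G → R) (k : G) (a : G × G) : R :=
  f (k - a.1) * g (k - a.1 - a.2) * h (k - a.2)

/-- A parallelogram, given by one vertex and its two sides, is determined by the other three
vertices. -/
def parallelogramEquiv : G × G × G ≃ (G × G) × G where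
  toFun x := ((x.1 - x.2.1, x.1 - x.2.1 - x.2.2), x.1 - x.2.2)
  invFun y := (y.2 + (y.1.1 - y.1.2), y.2 - y.1.2, y.1.1 - y.1.2)
  left_inv x := by ext <;> simp
  right_inv y := by ext <;> simp

theorem norm_parallelogramProd_rpow {R : Type*} [NormedRing R] [NormMulClass R] (f g h : G → R)
    (k : G) (a : G × G) (r : ℝ) :
    ‖parallelogramProd f g h k a‖ ^ r =
      parallelogramProd (‖f ·‖ ^ r) (‖g ·‖ ^ r) (‖h ·‖ ^ r) k a := by
  simp only [parallelogramProd, norm_mul, Real.mul_rpow, norm_nonneg, mul_nonneg]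

theorem hasSum_parallelogramProd {R : Type*} [NormedRing R] [CompleteSpace R] {f g h : G → R}
    (hf : Summable (‖f ·‖)) (hg : Summable (‖g ·‖)) (hh : Summable (‖h ·‖)) :
    HasSum (fun x : G × G × G ↦ parallelogramProd f g h x.1 x.2)
      ((∑' i, f i) * (∑' i, g i) * ∑' i, h i) := by
  rw [tsum_mul_tsum_of_summable_norm hf hg, tsum_mul_tsum_of_summable_norm (hf.mul_norm hg) hh]
  exact parallelogramEquiv.hasSum_iff.mpr
    (summable_mul_of_summable_norm (hf.mul_norm hg) hh).hasSum

/-- The change of variables from the vertices `j₁`, `j₂` of a parallelogram with vertex `k` to its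
sides `k - j₁`, `j₁ - j₂`. -/
def parallelogramSides (k : G) : G × G ≃ G × G where
  toFun j := (k - j.1, j.1 - j.2)
  invFun a := (k - a.1, k - a.1 - a.2)
  left_inv j := by simp
  right_inv a := by simp

theorem parallelogramProd_parallelogramSides {R : Type*} [Mul R] (f g h : G → R) (k : G)
    (j : G × G) :
    parallelogramProd f g h k (parallelogramSides k j) = f j.1 * g j.2 * h (k - j.1 + j.2) := by
  simp [parallelogramProd, parallelogramSides, sub_add]

variable {𝕜 : Type*} [RCLike 𝕜] {p q : ℝ≥0∞}

/-- The trilinear form summing `f`, `g`, `h` over all parallelograms with vertex `k`, the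
parallelogram with sides `a` having weight `w a`. -/
noncomputable def parallelogramSum (w : G × G → 𝕜) (f g h : G → 𝕜) (k : G) : 𝕜 :=
  ∑' a, parallelogramProd f g h k a * w a

section lp

variable (f g h : lp (fun _ : G ↦ 𝕜) p)

theorem hasSum_norm_parallelogramProd_rpow (hp : 0 < p.toReal) :
    HasSum (fun x : G × G × G ↦ ‖parallelogramProd f g h x.1 x.2‖ ^ p.toReal)
      ((‖f‖ * ‖g‖ * ‖h‖) ^ p.toReal) := by
  have hsum (u : lp (fun _ : G ↦ 𝕜) p) : Summable fun i ↦ ‖‖u i‖ ^ p.toReal‖ :=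
    ((lp.memℓp u).summable hp).norm
  simpa only [norm_parallelogramProd_rpow, ← lp.norm_rpow_eq_tsum hp, Real.mul_rpow,
    lp.norm_nonneg', mul_nonneg] using hasSum_parallelogramProd (hsum f) (hsum g) (hsum h)

theorem memℓp_parallelogramProd (hp : 0 < p.toReal) (k : G) :
    Memℓp (parallelogramProd f g h k) p :=
  memℓp_gen ((hasSum_norm_parallelogramProd_rpow f g h hp).summable.prod_factor k)

variable [p.HolderConjugate q] (w : lp (fun _ : G × G ↦ 𝕜) q)

theorem summable_norm_parallelogramProd_mul (hp : 0 < p.toReal) (k : G) :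
    Summable fun a ↦ ‖parallelogramProd f g h k a * w a‖ :=
  summable_norm_lp_mul ⟨_, memℓp_parallelogramProd f g h hp k⟩ w

theorem norm_parallelogramSum_rpow_le (hp : 0 < p.toReal) (k : G) :
    ‖parallelogramSum w f g h k‖ ^ p.toReal ≤
      ‖w‖ ^ p.toReal * ∑' a, ‖parallelogramProd f g h k a‖ ^ p.toReal := by
  let F : lp (fun _ : G × G ↦ 𝕜) p := ⟨_, memℓp_parallelogramProd f g h hp k⟩
  calc ‖parallelogramSum w f g h k‖ ^ p.toReal
      ≤ (‖F‖ * ‖w‖) ^ p.toReal :=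
        Real.rpow_le_rpow (norm_nonneg _) (norm_tsum_lp_mul_le F w) hp.le
    _ = ‖w‖ ^ p.toReal * ∑' a, ‖parallelogramProd f g h k a‖ ^ p.toReal := by
        rw [Real.mul_rpow (lp.norm_nonneg' _) (lp.norm_nonneg' _), lp.norm_rpow_eq_tsum hp,
          mul_comm]

theorem memℓp_parallelogramSum (hp : 0 < p.toReal) : Memℓp (parallelogramSum w f g h) p :=
  memℓp_gen <| .of_nonneg_of_le (fun _ ↦ by positivity)
    (norm_parallelogramSum_rpow_le f g h w hp)
    ((hasSum_norm_parallelogramProd_rpow f g h hp).summable.prod.mul_left _)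

theorem norm_parallelogramSum_le (hp : 0 < p.toReal) :
    ‖(⟨_, memℓp_parallelogramSum f g h w hp⟩ : lp (fun _ : G ↦ 𝕜) p)‖ ≤
      ‖w‖ * (‖f‖ * ‖g‖ * ‖h‖) := by
  have hprod := hasSum_norm_parallelogramProd_rpow f g h hp
  have hfgh : 0 ≤ ‖f‖ * ‖g‖ * ‖h‖ :=
    mul_nonneg (mul_nonneg (lp.norm_nonneg' f) (lp.norm_nonneg' g)) (lp.norm_nonneg' h)
  refine lp.norm_le_of_tsum_le hp (mul_nonneg (lp.norm_nonneg' w) hfgh) ?_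
  calc ∑' k, ‖parallelogramSum w f g h k‖ ^ p.toReal
      ≤ ∑' k, ‖w‖ ^ p.toReal * ∑' a, ‖parallelogramProd f g h k a‖ ^ p.toReal :=
        ((memℓp_parallelogramSum f g h w hp).summable hp).tsum_le_tsum
          (norm_parallelogramSum_rpow_le f g h w hp) (hprod.summable.prod.mul_left _)
    _ = (‖w‖ * (‖f‖ * ‖g‖ * ‖h‖)) ^ p.toReal := by
        rw [tsum_mul_left, ← hprod.summable.tsum_prod, hprod.tsum_eq,
          Real.mul_rpow (lp.norm_nonneg' w) hfgh]

end lp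

end Parallelogram

section NonResonant

/-- The weight `(2ab)⁻¹` of the non-resonant sum in the variables `a = k - j₁`, `b = j₁ - j₂`. It
vanishes on the resonant set `ab = 0` because `0⁻¹ = 0`. -/
noncomputable def nrWeight (a : ℤ × ℤ) : ℂ := (2 * a.1 * a.2)⁻¹

theorem summable_norm_nrWeight_rpow {r : ℝ} (hr : 1 < r) : Summable fun a ↦ ‖nrWeight a‖ ^ r := by
  have hint : Summable fun n : ℤ ↦ |(n : ℝ)| ^ (-r) := Real.summable_abs_int_rpow hr
  refine ((hint.mul_of_nonneg hint (fun _ ↦ by positivity) fun _ ↦ by positivity).mul_left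
    (2 ^ (-r))).congr fun a ↦ ?_
  simp only [nrWeight, norm_inv, norm_mul, Complex.norm_intCast, Complex.norm_ofNat]
  rw [Real.inv_rpow (by positivity), ← Real.rpow_neg (by positivity),
    Real.mul_rpow (by positivity) (by positivity), Real.mul_rpow (by positivity) (by positivity),
    mul_assoc]

theorem memℓp_nrWeight {q : ℝ≥0∞} (hq : 1 < q) : Memℓp nrWeight q := by
  obtain ⟨r, hr, hrq⟩ := exists_between hq
  refine (memℓp_gen (summable_norm_nrWeight_rpow ?_)).of_exponent_ge hrq.le
  simpa using ENNReal.toReal_strict_mono hrq.ne_top hr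

variable (M N P : ℤ → ℂ) (k : ℤ)

theorem parallelogramProd_mul_nrWeight (j : ℤ × ℤ) :
    parallelogramProd M N P k (parallelogramSides k j) * nrWeight (parallelogramSides k j) =
      M j.1 * N j.2 * P (k - j.1 + j.2) /
        ((k ^ 2 - j.1 ^ 2 + j.2 ^ 2 - (k - j.1 + j.2) ^ 2 : ℤ) : ℂ) := by
  have hden : k ^ 2 - j.1 ^ 2 + j.2 ^ 2 - (k - j.1 + j.2) ^ 2 = 2 * (k - j.1) * (j.1 - j.2) := by
    ring
  rw [parallelogramProd_parallelogramSides, hden]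
  simp [nrWeight, parallelogramSides, div_eq_mul_inv]

theorem parallelogramSum_nrWeight : parallelogramSum nrWeight M N P = nrQuotientSum M N P :=
  funext fun k ↦ ((parallelogramSides k).tsum_eq _).symm.trans
    (tsum_congr (parallelogramProd_mul_nrWeight M N P k))

theorem exists_nrQuotientSum_lp_bound (p : ℝ≥0∞) [Fact (1 ≤ p)] (hp : p ≠ ∞) :
    ∃ C : ℝ, 0 < C ∧ ∀ M N P : lp (fun _ : ℤ ↦ ℂ) p,
      (∀ k : ℤ, Summable fun j : ℤ × ℤ ↦
        ‖M j.1 * N j.2 * P (k - j.1 + j.2) /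
          ((k ^ 2 - j.1 ^ 2 + j.2 ^ 2 - (k - j.1 + j.2) ^ 2 : ℤ) : ℂ)‖) ∧
      ∃ S : lp (fun _ : ℤ ↦ ℂ) p,
        ⇑S = nrQuotientSum M N P ∧ ‖S‖ ≤ C * ‖M‖ * ‖N‖ * ‖P‖ := by
  have hpos : 0 < p.toReal := ENNReal.toReal_pos (one_pos.trans_le Fact.out).ne' hp
  have hq : 1 < p.conjExponent := (ENNReal.HolderConjugate.lt_top_iff_one_lt p _).mp hp.lt_top
  let w : lp (fun _ : ℤ × ℤ ↦ ℂ) p.conjExponent := ⟨nrWeight, memℓp_nrWeight hq⟩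
  have hw : 0 ≤ ‖w‖ := lp.norm_nonneg' w
  refine ⟨‖w‖ + 1, by positivity, fun M N P ↦ ⟨fun k ↦ ?_,
    ⟨_, memℓp_parallelogramSum M N P w hpos⟩, parallelogramSum_nrWeight M N P, ?_⟩⟩
  · simp only [← parallelogramProd_mul_nrWeight]
    exact (parallelogramSides k).summable_iff.mpr
      (summable_norm_parallelogramProd_mul M N P w hpos k)
  · calc _ ≤ ‖w‖ * (‖M‖ * ‖N‖ * ‖P‖) := norm_parallelogramSum_le M N P w hpos
      _ ≤ (‖w‖ + 1) * (‖M‖ * ‖N‖ * ‖P‖) := by gcongr; linarith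
      _ = (‖w‖ + 1) * ‖M‖ * ‖N‖ * ‖P‖ := by ring

end NonResonant

/-- For `1 ≤ p < ∞`, the non-resonant sum with denominator `k² - j₁² + j₂² - j₃²`
maps `ℓ^p(ℤ) × ℓ^p(ℤ) × ℓ^p(ℤ)` boundedly into `ℓ^p(ℤ)`. -/
theorem nr_quotient_sum_lp_bound (p : ℝ) (hp : 1 ≤ p) :
    ∃ C : ℝ, 0 < C ∧ ∀ M N P : ℤ → ℂ,
      Summable (fun k : ℤ => ‖M k‖ ^ p) →
      Summable (fun k : ℤ => ‖N k‖ ^ p) →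
      Summable (fun k : ℤ => ‖P k‖ ^ p) →
      (∀ k : ℤ, Summable (fun j : ℤ × ℤ =>
        ‖M j.1 * N j.2 * P (k - j.1 + j.2) /
          ((k ^ 2 - j.1 ^ 2 + j.2 ^ 2 - (k - j.1 + j.2) ^ 2 : ℤ) : ℂ)‖)) ∧
      Summable (fun k : ℤ => ‖nrQuotientSum M N P k‖ ^ p) ∧
      (∑' k : ℤ, ‖nrQuotientSum M N P k‖ ^ p) ^ (1 / p) ≤
        C * (∑' k : ℤ, ‖M k‖ ^ p) ^ (1 / p) * (∑' k : ℤ, ‖N k‖ ^ p) ^ (1 / p) *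
          (∑' k : ℤ, ‖P k‖ ^ p) ^ (1 / p) := by
  have : Fact (1 ≤ ENNReal.ofReal p) := ⟨by simpa using hp⟩
  have hp' : (ENNReal.ofReal p).toReal = p := ENNReal.toReal_ofReal (by positivity)
  have hpos : 0 < (ENNReal.ofReal p).toReal := by rw [hp']; positivity
  obtain ⟨C, hC, hbound⟩ := exists_nrQuotientSum_lp_bound _ (ENNReal.ofReal_ne_top (r := p))
  refine ⟨C, hC, fun M N P hM hN hP ↦ ?_⟩
  obtain ⟨habs, S, hS, hle⟩ := hbound ⟨M, memℓp_gen (by rwa [hp'])⟩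
    ⟨N, memℓp_gen (by rwa [hp'])⟩ ⟨P, memℓp_gen (by rwa [hp'])⟩
  have hsum := (lp.memℓp S).summable hpos
  simp only [lp.norm_eq_tsum_rpow hpos, hp', hS] at hsum hle
  exact ⟨habs, hsum, hle⟩
end

section
/- Let p, q be positive integers with q odd and gcd(p,q) = 1, and set t := p/(2πq). Let 0 < η < 1 and let α ∈ ℓ¹(ℤ), with associated continuous 2π-periodic function f(ξ) := ∑_{k∈ℤ} α_k e^{−ikξ}. Assume f(ξ) = 0 for every ξ ∈ ℝ with dist(ξ, 2πℤ) ≥ ηπ/p. Then for every x ∈ ℝ with dist(x, (1/q)ℤ) > η/q, one has ∑_{k∈ℤ} α_k e^{i(x−k)²/(4t)} = 0 (the sum converging absolutely). In particular, the free Schrödinger evolution e^{itΔ}(∑_k α_k δ_k)(x) = ∑_k α_k e^{i(x−k)²/(4t)}/√(4πit) vanishes at the Talbot time t = p/(2πq) at every point x at distance greater than η/q from (1/q)ℤ. -/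
open scoped BigOperators Real

/-!
At `t = p/(2πq)` the phase is `e^{iπq(x−k)²/(2p)} = e^{iπqx²/(2p)} e^{−ik·πqx/p} e^{iπqk²/(2p)}`,
and its last factor depends only on `k` modulo `2p`, so it is a combination of the characters
`k ↦ e^{2πimk/(2p)}`. Multiplying `α` by such a character translates `f`; hence the evolution at `x`
is a combination of the values of `f` at the points `π(qx − m)/p`, and `f` vanishes at all of them
once `x` is far from `(1/q)ℤ`.
-/

section

open Complex

theorem zmod_eq_sum_exp_smul_dft {E : Type*} [AddCommGroup E] [Module ℂ E] {N : ℕ} [NeZero N]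
    (Φ : ZMod N → E) (k : ℤ) :
    Φ k = (N : ℂ)⁻¹ • ∑ m : ZMod N, exp (2 * π * I * (m.val * k) / N) • ZMod.dft Φ m := by
  have inversion : Φ k = ZMod.dft.symm (ZMod.dft Φ) k := by simp
  rw [inversion, ZMod.invDFT_apply]
  congr! 3 with m
  have cast_mul_val : m * (k : ZMod N) = ((m.val * k : ℤ) : ZMod N) := by simp
  rw [cast_mul_val, ZMod.stdAddChar_coe]
  push_cast
  rfl

variable {E : Type*} [NormedAddCommGroup E] [NormedSpace ℂ E] {α : ℤ → E}

/-- The Fourier transform `ξ ↦ ∑_k e^{−ikξ} α_k` of the distribution `∑_k α_k δ_k`, for a sequence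
`α` in a complex normed space. It takes the value `0` wherever the series diverges. -/
noncomputable def latticeFourier (α : ℤ → E) (ξ : ℝ) : E :=
  ∑' k : ℤ, exp (-I * k * ξ) • α k

theorem summable_exp_neg_I_mul_smul [CompleteSpace E] (hα : Summable fun k => ‖α k‖) (ξ : ℝ) :
    Summable fun k : ℤ => exp (-I * k * ξ) • α k := by
  refine .of_norm (hα.congr fun k => ?_)
  simp [norm_smul, norm_exp]

theorem latticeFourier_zmod_smul [CompleteSpace E] {N : ℕ} [NeZero N] (Φ : ZMod N → ℂ)
    (hα : Summable fun k => ‖α k‖) (ξ : ℝ) :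
    latticeFourier (fun k => Φ k • α k) ξ =
      (N : ℂ)⁻¹ • ∑ m : ZMod N, ZMod.dft Φ m • latticeFourier α (ξ - 2 * π * m.val / N) := by
  have exp_translate (m : ZMod N) (k : ℤ) :
      exp (-I * k * (ξ - 2 * π * m.val / N : ℝ)) =
        exp (-I * k * ξ) * exp (2 * π * I * (m.val * k) / N) := by
    rw [← exp_add]
    push_cast
    ring_nf
  have expand (k : ℤ) : exp (-I * k * ξ) • Φ k • α k =
      (N : ℂ)⁻¹ • ∑ m : ZMod N,
        ZMod.dft Φ m • exp (-I * k * (ξ - 2 * π * m.val / N : ℝ)) • α k := by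
    rw [zmod_eq_sum_exp_smul_dft Φ k]
    simp only [exp_translate, smul_smul, ← Finset.sum_smul, Finset.mul_sum, smul_eq_mul]
    congr! 2 with m
    ring
  have summable_term (m : ZMod N) :=
    (summable_exp_neg_I_mul_smul hα (ξ - 2 * π * m.val / N)).const_smul (ZMod.dft Φ m)
  simp only [latticeFourier, expand]
  rw [(summable_sum fun m _ => summable_term m).tsum_const_smul,
    Summable.tsum_finsetSum fun m _ => summable_term m]
  congr! 2 with m
  exact (summable_exp_neg_I_mul_smul hα _).tsum_const_smul _

/-- The quadratic phase `k ↦ e^{iπqk²/(2p)}` as a function on `ℤ/2p`; its discrete Fourier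
transform consists of the Gauss sums of the Talbot effect. It is defined through the representatives
`0 ≤ k < 2p`; `talbotPhase_intCast` gives the formula for every integer `k`. -/
noncomputable def talbotPhase (p : ℕ) (q : ℤ) (j : ZMod (2 * p)) : ℂ :=
  exp (I * π * q * j.val ^ 2 / (2 * p))

theorem talbotPhase_intCast (p : ℕ) [NeZero p] (q k : ℤ) :
    talbotPhase p q k = exp (I * π * q * k ^ 2 / (2 * p)) := by
  obtain ⟨n, val_eq⟩ : ∃ n : ℤ, ((k : ZMod (2 * p)).val : ℂ) = k - 2 * p * n := by
    have division := Int.emod_add_mul_ediv k (2 * p : ℕ)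
    rw [← ZMod.val_intCast] at division
    exact ⟨k / (2 * p : ℕ), eq_sub_of_add_eq (mod_cast division)⟩
  have hp : (p : ℂ) ≠ 0 := NeZero.ne _
  rw [talbotPhase, exp_eq_exp_iff_exists_int]
  refine ⟨-(q * n * (k - p * n)), ?_⟩
  rw [val_eq]
  push_cast
  field_simp
  ring

theorem exp_I_mul_sq_div_talbotTime (p : ℕ) [NeZero p] (q : ℤ) (x : ℝ) (k : ℤ) :
    exp (I * ((x - k) ^ 2 : ℝ) / (4 * (p / (2 * π * q)))) =
      exp (I * π * q * x ^ 2 / (2 * p)) *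
        (exp (-I * k * (π * q * x / p : ℝ)) * talbotPhase p q k) := by
  rw [talbotPhase_intCast, ← exp_add, ← exp_add]
  push_cast
  field_simp
  ring_nf

theorem tsum_exp_talbotTime_smul [CompleteSpace E] (p : ℕ) [NeZero p] (q : ℤ)
    (hα : Summable fun k => ‖α k‖) (x : ℝ) :
    ∑' k : ℤ, exp (I * ((x - k) ^ 2 : ℝ) / (4 * (p / (2 * π * q)))) • α k =
      exp (I * π * q * x ^ 2 / (2 * p)) • (2 * p : ℂ)⁻¹ • ∑ m : ZMod (2 * p),
        ZMod.dft (talbotPhase p q) m • latticeFourier α (π * (q * x - m.val) / p) := by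
  have frequency (m : ZMod (2 * p)) :
      π * q * x / p - 2 * π * m.val / (2 * p : ℕ) = π * (q * x - m.val) / p := by
    push_cast
    field_simp
  calc ∑' k : ℤ, exp (I * ((x - k) ^ 2 : ℝ) / (4 * (p / (2 * π * q)))) • α k
      = exp (I * π * q * x ^ 2 / (2 * p)) •
          latticeFourier (fun k => talbotPhase p q k • α k) (π * q * x / p) := by
        simp only [exp_I_mul_sq_div_talbotTime, mul_smul, latticeFourier]
        exact tsum_const_smul'' _
    _ = _ := by
        rw [latticeFourier_zmod_smul _ hα]
        simp only [frequency]
        norm_cast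

theorem le_abs_pi_mul_div_sub_two_pi_mul {p : ℕ} (hp : 0 < p) {q : ℤ} (hq : q ≠ 0) {η x : ℝ}
    (hx : ∀ n : ℤ, η / |(q : ℝ)| ≤ |x - n / q|) (m n : ℤ) :
    η * π / p ≤ |π * (q * x - m) / p - 2 * π * n| := by
  have hqR : (q : ℝ) ≠ 0 := mod_cast hq
  calc η * π / p = π * |(q : ℝ)| / p * (η / |(q : ℝ)|) := by field_simp
    _ ≤ π * |(q : ℝ)| / p * |x - (m + 2 * p * n : ℤ) / q| := by gcongr; exact hx _
    _ = |π * q / p * (x - (m + 2 * p * n : ℤ) / q)| := by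
        simp [abs_mul, abs_div, abs_of_pos Real.pi_pos]
    _ = |π * (q * x - m) / p - 2 * π * n| := by
        congr 1
        push_cast
        field_simp
        ring

theorem linear_talbot_vanishing_general [CompleteSpace E] {p : ℕ} (hp : 0 < p) {q : ℤ} (hq : q ≠ 0)
    {η : ℝ} (hα : Summable fun k => ‖α k‖)
    (hsupp : ∀ ξ : ℝ, (∀ n : ℤ, η * π / p ≤ |ξ - 2 * π * n|) → latticeFourier α ξ = 0)
    {x : ℝ} (hx : ∀ n : ℤ, η / |(q : ℝ)| ≤ |x - n / q|) :
    (Summable fun k : ℤ => ‖exp (I * ((x - k) ^ 2 : ℝ) / (4 * (p / (2 * π * q)))) • α k‖) ∧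
      ∑' k : ℤ, exp (I * ((x - k) ^ 2 : ℝ) / (4 * (p / (2 * π * q)))) • α k = 0 := by
  have : NeZero p := ⟨hp.ne'⟩
  have norm_phase (k : ℤ) : ‖exp (I * ((x - k) ^ 2 : ℝ) / (4 * (p / (2 * π * q))))‖ = 1 := by
    rw [← norm_exp_I_mul_ofReal ((x - k) ^ 2 / (4 * (p / (2 * π * q))))]
    push_cast
    rw [mul_div_assoc]
  refine ⟨by simpa only [norm_smul, norm_phase, one_mul] using hα, ?_⟩
  rw [tsum_exp_talbotTime_smul p q hα, Finset.sum_eq_zero, smul_zero, smul_zero]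
  intro m _
  rw [hsupp _ fun n => mod_cast le_abs_pi_mul_div_sub_two_pi_mul hp hq hx m.val n, smul_zero]

end

/-- Linear Talbot effect: at the Talbot time `t = p/(2πq)` (`q` odd, `gcd(p,q)=1`), if the
`2π`-periodic Fourier transform `f(ξ) = ∑_k α_k e^{−ikξ}` of `∑_k α_k δ_k` vanishes at every
`ξ` at distance `≥ ηπ/p` from `2πℤ`, then the free evolution
`∑_k α_k e^{i(x−k)²/(4t)}` vanishes at every `x` at distance `> η/q` from `(1/q)ℤ`. -/
theorem linear_talbot_vanishing (p q : ℕ) (hp : 0 < p) (hq : Odd q) (hq0 : 0 < q)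
    (hpq : Nat.gcd p q = 1) (η : ℝ) (hη0 : 0 < η) (hη1 : η < 1)
    (α : ℤ → ℂ) (hα : Summable (fun k : ℤ => ‖α k‖))
    (hsupp : ∀ ξ : ℝ, (∀ n : ℤ, η * π / p ≤ |ξ - 2 * π * n|) →
      ∑' k : ℤ, α k * Complex.exp (-Complex.I * (k : ℂ) * (ξ : ℂ)) = 0) :
    ∀ x : ℝ, (∀ n : ℤ, η / q < |x - (n : ℝ) / q|) →
      Summable (fun k : ℤ =>
        ‖α k * Complex.exp (Complex.I * (((x - (k : ℝ)) ^ 2 : ℝ) : ℂ) /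
          (4 * ((p : ℂ) / (2 * π * q))))‖) ∧
      ∑' k : ℤ, α k * Complex.exp (Complex.I * (((x - (k : ℝ)) ^ 2 : ℝ) : ℂ) /
          (4 * ((p : ℂ) / (2 * π * q)))) = 0 := by
  intro x hx
  simpa [mul_comm (α _)] using linear_talbot_vanishing_general hp
    (Int.natCast_ne_zero.mpr hq0.ne') hα
    (by simpa only [latticeFourier, smul_eq_mul, mul_comm (α _)] using hsupp)
    (fun n => by simpa using (hx n).le)
end
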